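/- arXiv:math/9806041 — 6 statements merged into one kernel-verified Lean document; each statement's English description precedes it below -/
import Mathlib

section
/- For all integers l ≥ 1 and n ≥ 1, the quantity C(l,n) := ∑_{r=0}^{n} (-1)^r · (n!/(n-r)!) / (3^r · l·(l+1)···(l+r)) (a rational number) satisfies Catalan's recurrence l·C(l,n) + (n/3)·C(l+1, n-1) = 1. -/
/-!
Write `n = m + 1`. The term `r = 0` of `C(l, m + 1)` is `1 / l`, which contributes `1` to
`l * C(l, m + 1)`. Since `(m + 1)` descending `r + 1` steps is `(m + 1)` times `m` descending `r`
steps, and `l (l + 1) ⋯ (l + r + 1)` is `l` times the product for `l + 1` with `r + 1` factors,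
`l` times the term `r + 1` of `C(l, m + 1)` is `-(m + 1) / 3` times the term `r` of `C(l + 1, m)`.
-/

/-- Catalan's inheritance formula: the share of a legitimate child among
`l` legitimate and `n` illegitimate children,
`C(l,n) = ∑_{r=0}^{n} (-1)^r · (n!/(n-r)!) / (3^r · l·(l+1)···(l+r))`. -/
noncomputable def catalanShare (l n : ℕ) : ℚ :=
  ∑ r ∈ Finset.range (n + 1),
    (-1) ^ r * (Nat.descFactorial n r : ℚ) /
      (3 ^ r * ∏ i ∈ Finset.range (r + 1), ((l + i : ℕ) : ℚ))

theorem catalanShare_recurrence (l n : ℕ) (hl : 1 ≤ l) (hn : 1 ≤ n) :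
    (l : ℚ) * catalanShare l n + ((n : ℚ) / 3) * catalanShare (l + 1) (n - 1) = 1 := by
  obtain ⟨m, rfl⟩ : ∃ m, n = m + 1 := ⟨n - 1, by omega⟩
  have hl0 : (l : ℚ) ≠ 0 := by exact_mod_cast (by omega : l ≠ 0)
  unfold catalanShare
  -- Split off the term `r = 0` of `C(l, m + 1)`; the remaining sums cancel termwise.
  rw [Nat.add_sub_cancel, Finset.sum_range_succ', mul_add, Finset.mul_sum, Finset.mul_sum,
    add_right_comm, ← Finset.sum_add_distrib, Finset.sum_eq_zero]
  · simp [hl0]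
  · intro r _
    have hP : ∏ i ∈ Finset.range (r + 1), ((l + 1 + i : ℕ) : ℚ) ≠ 0 :=
      Finset.prod_ne_zero_iff.mpr fun i _ => by exact_mod_cast (by omega : l + 1 + i ≠ 0)
    have hprod : ∏ i ∈ Finset.range (r + 1 + 1), ((l + i : ℕ) : ℚ)
        = (∏ i ∈ Finset.range (r + 1), ((l + 1 + i : ℕ) : ℚ)) * l := by
      rw [Finset.prod_range_succ']
      simp only [add_zero, add_assoc, add_comm 1]
    rw [hprod, Nat.succ_descFactorial_succ]
    generalize ∏ i ∈ Finset.range (r + 1), ((l + 1 + i : ℕ) : ℚ) = P at hP ⊢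
    push_cast
    field_simp
    ring
end

section
/- Let a : ℕ → ℕ → ℚ satisfy a(l,0) = 1/l for all l ≥ 1, and l·a(l,n) + (n/3)·a(l+1, n-1) = 1 for all l ≥ 1 and n ≥ 1. Then for all l ≥ 1 and n ≥ 0, a(l,n) = ∑_{r=0}^{n} (-1)^r · (n!/(n-r)!) / (3^r · l·(l+1)···(l+r)). -/
/-- No hypothesis `l ≠ 0` is needed: at `l = 0` both sides vanish, as division by zero gives zero. -/
theorem catalanShare_succ (l n : ℕ) :
    catalanShare l (n + 1) =
      1 / (l : ℚ) - ((n + 1 : ℕ) : ℚ) / (3 * l) * catalanShare (l + 1) n := by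
  unfold catalanShare
  rw [Finset.sum_range_succ', Finset.mul_sum, sub_eq_add_neg, ← Finset.sum_neg_distrib, add_comm]
  congr 1
  · simp
  · refine Finset.sum_congr rfl fun r _ => ?_
    have hprod : ∏ i ∈ Finset.range (r + 1 + 1), ((l + i : ℕ) : ℚ) =
        (∏ i ∈ Finset.range (r + 1), ((l + 1 + i : ℕ) : ℚ)) * l := by
      rw [Finset.prod_range_succ']
      congr 1
      refine Finset.prod_congr rfl fun i _ => ?_
      congr 1
      ring
    rw [hprod, Nat.succ_descFactorial_succ, Nat.cast_mul, div_mul_div_comm, ← neg_div]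
    congr 1 <;> ring

theorem catalan_formula (a : ℕ → ℕ → ℚ)
    (hbase : ∀ l : ℕ, 1 ≤ l → a l 0 = 1 / (l : ℚ))
    (hrec : ∀ l n : ℕ, 1 ≤ l → 1 ≤ n →
      (l : ℚ) * a l n + ((n : ℚ) / 3) * a (l + 1) (n - 1) = 1) :
    ∀ l n : ℕ, 1 ≤ l → a l n = catalanShare l n := by
  intro l n
  induction n generalizing l with
  | zero =>
    intro hl
    simp [hbase l hl, catalanShare]
  | succ n ih =>
    intro hl
    have hl0 : (l : ℚ) ≠ 0 := by exact_mod_cast (by omega : l ≠ 0)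
    have h := hrec l (n + 1) hl (by omega)
    rw [Nat.add_sub_cancel, ih (l + 1) (by omega)] at h
    rw [catalanShare_succ]
    field_simp
    linarith
end

section
/- For all integers l ≥ 1 and n ≥ 0, the quantity C(l,n) := ∑_{r=0}^{n} (-1)^r · (n!/(n-r)!) / (3^r · l·(l+1)···(l+r)) satisfies the recurrence C(l, n+1) = 1/(l+n+1) + (2(n+1)/(3(l+n+1))) · C(l,n). -/
/-- The summand of `catalanShare l n`. -/
noncomputable def catalanTerm (l n r : ℕ) : ℚ :=
  (-1) ^ r * (Nat.descFactorial n r : ℚ) /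
    (3 ^ r * ∏ i ∈ Finset.range (r + 1), ((l + i : ℕ) : ℚ))

lemma catalanTerm_eq_zero {l n r : ℕ} (h : n < r) : catalanTerm l n r = 0 := by
  simp [catalanTerm, Nat.descFactorial_eq_zero_iff_lt.mpr h]

lemma catalanTerm_prod_ne_zero {l : ℕ} (hl : 1 ≤ l) (r : ℕ) :
    ∏ i ∈ Finset.range r, ((l + i : ℕ) : ℚ) ≠ 0 :=
  Finset.prod_ne_zero_iff.mpr fun i _ => Nat.cast_ne_zero.mpr (by omega)

lemma catalanTerm_succ_succ {l : ℕ} (hl : 1 ≤ l) (n r : ℕ) :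
    3 * ((l : ℚ) + r + 1) * catalanTerm l (n + 1) (r + 1) =
      -((n : ℚ) + 1) * catalanTerm l n r := by
  have hP := catalanTerm_prod_ne_zero hl (r + 1)
  have hf : (l : ℚ) + (r + 1) ≠ 0 := by positivity
  rw [catalanTerm, catalanTerm, Finset.prod_range_succ _ (r + 1), Nat.succ_descFactorial_succ]
  generalize ∏ i ∈ Finset.range (r + 1), ((l + i : ℕ) : ℚ) = P at *
  push_cast
  field_simp
  ring

/-- For `r > n` both sides vanish, so the subtraction `n - r` may be taken in `ℚ`. -/
lemma catalanTerm_succ_right {l : ℕ} (hl : 1 ≤ l) (n r : ℕ) :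
    3 * ((l : ℚ) + r + 1) * catalanTerm l n (r + 1) =
      -((n : ℚ) - r) * catalanTerm l n r := by
  rcases lt_or_ge n r with h | h
  · rw [catalanTerm_eq_zero h, catalanTerm_eq_zero (h.trans r.lt_succ_self)]
    ring
  have hP := catalanTerm_prod_ne_zero hl (r + 1)
  have hf : (l : ℚ) + (r + 1) ≠ 0 := by positivity
  rw [catalanTerm, catalanTerm, Finset.prod_range_succ _ (r + 1), Nat.descFactorial_succ]
  generalize ∏ i ∈ Finset.range (r + 1), ((l + i : ℕ) : ℚ) = P at *
  push_cast [Nat.cast_sub h]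
  field_simp
  ring

lemma catalanTerm_telescope {l : ℕ} (hl : 1 ≤ l) (n r : ℕ) :
    ((l : ℚ) + n + 1) * catalanTerm l (n + 1) r - 2 * ((n : ℚ) + 1) / 3 * catalanTerm l n r =
      ((l : ℚ) + (r : ℕ)) * catalanTerm l (n + 1) r -
        ((l : ℚ) + (r + 1 : ℕ)) * catalanTerm l (n + 1) (r + 1) := by
  have h₁ := catalanTerm_succ_succ hl n r
  have h₂ := catalanTerm_succ_right hl (n + 1) r
  push_cast at h₂ ⊢
  linarith

theorem catalanShare_zeilberger_recurrence (l n : ℕ) (hl : 1 ≤ l) :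
    catalanShare l (n + 1) =
      1 / ((l : ℚ) + n + 1) +
        (2 * ((n : ℚ) + 1) / (3 * ((l : ℚ) + n + 1))) * catalanShare l n := by
  have hs : catalanShare l (n + 1) = ∑ r ∈ Finset.range (n + 2), catalanTerm l (n + 1) r := rfl
  -- The sum for `n` is extended by the vanishing term `r = n + 1`, to match the range for `n + 1`.
  have hs' : catalanShare l n = ∑ r ∈ Finset.range (n + 2), catalanTerm l n r := by
    rw [Finset.sum_range_succ, catalanTerm_eq_zero n.lt_succ_self, add_zero]
    rfl
  have hl0 : (l : ℚ) ≠ 0 := Nat.cast_ne_zero.mpr (by omega)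
  have h0 : ((l : ℚ) + (0 : ℕ)) * catalanTerm l (n + 1) 0 = 1 := by
    simp [catalanTerm, hl0]
  have key : ((l : ℚ) + n + 1) * catalanShare l (n + 1) -
      2 * ((n : ℚ) + 1) / 3 * catalanShare l n = 1 := by
    rw [hs, hs', Finset.mul_sum, Finset.mul_sum, ← Finset.sum_sub_distrib,
      Finset.sum_congr rfl fun r _ => catalanTerm_telescope hl n r,
      Finset.sum_range_sub' (fun r : ℕ => ((l : ℚ) + (r : ℕ)) * catalanTerm l (n + 1) r), h0,
      catalanTerm_eq_zero (n + 1).lt_succ_self, mul_zero, sub_zero]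
  have hd : (l : ℚ) + n + 1 ≠ 0 := by positivity
  field_simp
  linarith
end

section
/- For all integers l ≥ 1 and n ≥ 1, the quantity A(l,n) := (n! · (2/3)^n / (n+l)!) · ∑_{b=0}^{n} ((l+b-1)!/b!) · (3/2)^b satisfies l·A(l,n) + (n/3)·A(l+1, n-1) = 1, and A(l,0) = 1/l for all l ≥ 1. -/
/-!
Both terms of the recurrence share the prefactor `n! (2/3)^n / (n+l)!`, since
`(n/3) (n-1)! (2/3)^(n-1) = (1/2) n! (2/3)^n`. Clearing it, the recurrence becomes the identity
`l ∑_{b ≤ n} (l+b-1)!/b! (3/2)^b + (1/2) ∑_{b < n} (l+b)!/b! (3/2)^b = (n+l)!/n! (3/2)^n`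
(`sum_identity`, written with `l = k + 1`), which telescopes: it is proved by induction on `n`.
-/

/-- The alternative closed formula for the legitimate child's share:
`A(l,n) = (n!·(2/3)^n/(n+l)!) · ∑_{b=0}^{n} ((l+b-1)!/b!)·(3/2)^b`. -/
noncomputable def altShare (l n : ℕ) : ℚ :=
  (Nat.factorial n : ℚ) * (2 / 3) ^ n / (Nat.factorial (n + l) : ℚ) *
    ∑ b ∈ Finset.range (n + 1),
      (Nat.factorial (l + b - 1) : ℚ) / (Nat.factorial b : ℚ) * (3 / 2) ^ b

/-- The recurrence for `altShare` with `l = k + 1` and the common prefactor cleared. -/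
lemma sum_identity (k n : ℕ) :
    ((k : ℚ) + 1) * ∑ b ∈ Finset.range (n + 1),
        (Nat.factorial (k + b) : ℚ) / (Nat.factorial b : ℚ) * (3 / 2) ^ b +
      1 / 2 * ∑ b ∈ Finset.range n,
        (Nat.factorial (k + 1 + b) : ℚ) / (Nat.factorial b : ℚ) * (3 / 2) ^ b =
    (Nat.factorial (n + (k + 1)) : ℚ) / (Nat.factorial n : ℚ) * (3 / 2) ^ n := by
  induction n with
  | zero => simp [Nat.factorial_succ]
  | succ n ih =>
    -- the increments of the two sides from `n` to `n + 1` agree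
    have step : ((k : ℚ) + 1) *
          ((Nat.factorial (k + (n + 1)) : ℚ) / (Nat.factorial (n + 1) : ℚ) * (3 / 2) ^ (n + 1)) +
        1 / 2 * ((Nat.factorial (k + 1 + n) : ℚ) / (Nat.factorial n : ℚ) * (3 / 2) ^ n) =
        (Nat.factorial (n + 1 + (k + 1)) : ℚ) / (Nat.factorial (n + 1) : ℚ) * (3 / 2) ^ (n + 1) -
        (Nat.factorial (n + (k + 1)) : ℚ) / (Nat.factorial n : ℚ) * (3 / 2) ^ n := by
      rw [show n + 1 + (k + 1) = (n + k + 1) + 1 by ring, show n + (k + 1) = n + k + 1 by ring,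
        show k + (n + 1) = n + k + 1 by ring, show k + 1 + n = n + k + 1 by ring,
        Nat.factorial_succ (n + k + 1), Nat.factorial_succ n]
      have hn : (Nat.factorial n : ℚ) ≠ 0 := by positivity
      rw [pow_succ]
      push_cast
      generalize (3 / 2 : ℚ) ^ n = x
      field_simp
      ring
    rw [Finset.sum_range_succ _ (n + 1),
      Finset.sum_range_succ (fun b => (Nat.factorial (k + 1 + b) : ℚ) / _ * _) n]
    linear_combination ih + step

theorem altShare_recurrence_and_base :
    (∀ l n : ℕ, 1 ≤ l → 1 ≤ n →
      (l : ℚ) * altShare l n + ((n : ℚ) / 3) * altShare (l + 1) (n - 1) = 1) ∧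
    (∀ l : ℕ, 1 ≤ l → altShare l 0 = 1 / (l : ℚ)) := by
  constructor
  · intro l n hl hn
    obtain ⟨k, rfl⟩ := Nat.exists_eq_add_of_le' hl
    obtain ⟨m, rfl⟩ := Nat.exists_eq_add_of_le' hn
    have key := sum_identity k (m + 1)
    have e1 : ∀ b, k + 1 + b - 1 = k + b := fun b => by omega
    have e2 : ∀ b, k + 1 + 1 + b - 1 = k + 1 + b := fun b => by omega
    simp only [altShare, e1, e2, Nat.add_sub_cancel]
    rw [show m + (k + 1 + 1) = m + 1 + (k + 1) by ring]
    generalize (∑ b ∈ Finset.range (m + 1 + 1),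
      (Nat.factorial (k + b) : ℚ) / (Nat.factorial b : ℚ) * (3 / 2) ^ b) = S at *
    generalize (∑ b ∈ Finset.range (m + 1),
      (Nat.factorial (k + 1 + b) : ℚ) / (Nat.factorial b : ℚ) * (3 / 2) ^ b) = T at *
    have hF : (Nat.factorial (m + 1 + (k + 1)) : ℚ) ≠ 0 := by positivity
    have hG : (Nat.factorial (m + 1) : ℚ) ≠ 0 := by positivity
    have hpow : (2 / 3 : ℚ) ^ (m + 1) * (3 / 2) ^ (m + 1) = 1 := by
      rw [← mul_pow]; norm_num
    calc _ = (Nat.factorial (m + 1) : ℚ) * (2 / 3) ^ (m + 1) /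
            (Nat.factorial (m + 1 + (k + 1)) : ℚ) * (((k : ℚ) + 1) * S + 1 / 2 * T) := by
          rw [Nat.factorial_succ m]
          push_cast
          ring
      _ = (2 / 3 : ℚ) ^ (m + 1) * (3 / 2) ^ (m + 1) := by
          rw [key]
          generalize (2 / 3 : ℚ) ^ (m + 1) = x
          generalize (3 / 2 : ℚ) ^ (m + 1) = y
          field_simp
      _ = 1 := hpow
  · intro l hl
    obtain ⟨k, rfl⟩ := Nat.exists_eq_add_of_le' hl
    have hk : (Nat.factorial k : ℚ) ≠ 0 := by positivity
    simp [altShare, Nat.factorial_succ]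
    field_simp
end

section
/- Let m ≥ 1, let x : Fin m → ℚ, let n : Fin m → ℕ, and let l ≥ 1 be an integer. Define G(l, n) := ∑_{r} [∏_{j=1}^{m} (-x_j)^{r_j} · binomial(n_j, r_j)] / [(1 + r_1 + ⋯ + r_m) · binomial(l + r_1 + ⋯ + r_m, l - 1)], where the sum ranges over all m-tuples r with 0 ≤ r_j ≤ n_j for each j. Then l·G(l, n) + ∑_{i=1}^{m} x_i · n_i · G(l+1, n - e_i) = 1, where e_i is the i-th standard unit vector and the i-th summand is interpreted as 0 when n_i = 0. -/
/-!
Write `w(r) = ∏ j, (-x j) ^ r j * C(n j, r j)`, `|r| = ∑ j, r j` and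
`D(l, s) = (1 + s) * C(l + s, l - 1)`. Shifting the summation index by the `i`-th unit vector and
using `n i * C(n i - 1, r i - 1) = r i * C(n i, r i)`, the `i`-th summand of the recurrence becomes
`-∑ r, r i * w(r) / D(l + 1, |r| - 1)` over the same box of tuples `r` as in `multiShare m x l n`
(`mul_multiShare_update`). Summing over `i` replaces `r i` by `|r|`, and
`s / D(l + 1, s - 1) = l / D(l, s)` for `s ≥ 1` (`shareDenom_succ`), so every term with `r ≠ 0`
cancels against `l * multiShare m x l n`. The term `r = 0` contributes `l / D(l, 0) = 1`.
-/

/-- The multi-mistress inheritance formula: with `l` legitimate children and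
`n j` children by Mistress `j`, each receiving fraction `x j` of a legitimate
share, the legitimate share is
`∑_{r} [∏_j (-x_j)^{r_j}·C(n_j,r_j)] / [(1+∑_j r_j)·C(l+∑_j r_j, l-1)]`,
summed over all tuples `r` with `0 ≤ r_j ≤ n_j`. -/
noncomputable def multiShare (m : ℕ) (x : Fin m → ℚ) (l : ℕ) (n : Fin m → ℕ) : ℚ :=
  ∑ r ∈ Fintype.piFinset (fun j => Finset.range (n j + 1)),
    (∏ j, (-x j) ^ (r j) * (Nat.choose (n j) (r j) : ℚ)) /
      ((1 + (∑ j, r j : ℕ)) * (Nat.choose (l + ∑ j, r j) (l - 1) : ℚ))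

/-- The denominator `(1 + s) * C(l + s, l - 1)` of the terms of `multiShare` with `∑ j, r j = s`. -/
def shareDenom (l s : ℕ) : ℚ := (1 + (s : ℕ)) * (Nat.choose (l + s) (l - 1) : ℚ)

lemma shareDenom_pos (l s : ℕ) : 0 < shareDenom l s := by
  unfold shareDenom
  have : 0 < Nat.choose (l + s) (l - 1) := Nat.choose_pos (by omega)
  positivity

/-- Both sides equal `(l + s + 1)! / ((l - 1)! * s!)`. -/
lemma shareDenom_succ (l s : ℕ) (hl : 1 ≤ l) :
    (l : ℚ) * shareDenom (l + 1) s = (s + 1) * shareDenom l (s + 1) := by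
  obtain ⟨k, rfl⟩ : ∃ k, l = k + 1 := ⟨l - 1, by omega⟩
  unfold shareDenom
  have h := Nat.choose_succ_right_eq (k + s + 2) k
  rw [show k + s + 2 - k = s + 2 by omega] at h
  have hq : (Nat.choose (k + s + 2) (k + 1) : ℚ) * (k + 1) =
      Nat.choose (k + s + 2) k * (s + 2) := by exact_mod_cast h
  rw [show k + 1 + 1 + s = k + s + 2 by ring, show k + 1 + (s + 1) = k + s + 2 by ring]
  simp only [Nat.add_sub_cancel]
  push_cast
  linear_combination (1 + (s : ℚ)) * hq

/-- The numerator `∏ j, (-x j) ^ r j * C(n j, r j)` of the term of `multiShare` indexed by `r`. -/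
def shareWeight {m : ℕ} (x : Fin m → ℚ) (n r : Fin m → ℕ) : ℚ :=
  ∏ j, (-x j) ^ (r j) * (Nat.choose (n j) (r j) : ℚ)

lemma multiShare_eq {m : ℕ} (x : Fin m → ℚ) (l : ℕ) (n : Fin m → ℕ) :
    multiShare m x l n = ∑ r ∈ Fintype.piFinset (fun j => Finset.range (n j + 1)),
      shareWeight x n r / shareDenom l (∑ j, r j) := rfl

/-- The absorption identity `n * C(n - 1, k) = (k + 1) * C(n, k + 1)` in the `i`-th factor. -/
lemma shareWeight_shift {m : ℕ} (x : Fin m → ℚ) (n r : Fin m → ℕ) (i : Fin m) (hi : n i ≠ 0) :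
    x i * n i * shareWeight x (Function.update n i (n i - 1)) r =
      -((r i + 1 : ℕ) * shareWeight x n (Function.update r i (r i + 1))) := by
  unfold shareWeight
  rw [← Finset.mul_prod_erase _ _ (Finset.mem_univ i),
    ← Finset.mul_prod_erase (Finset.univ) (fun j => (-x j) ^ (Function.update r i (r i + 1) j) *
      (Nat.choose (n j) (Function.update r i (r i + 1) j) : ℚ)) (Finset.mem_univ i)]
  have e : ∏ j ∈ Finset.univ.erase i, (-x j) ^ (r j) *
        (Nat.choose (Function.update n i (n i - 1) j) (r j) : ℚ) =
      ∏ j ∈ Finset.univ.erase i, (-x j) ^ (Function.update r i (r i + 1) j) *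
        (Nat.choose (n j) (Function.update r i (r i + 1) j) : ℚ) := by
    refine Finset.prod_congr rfl fun j hj => ?_
    simp [Function.update_of_ne (Finset.ne_of_mem_erase hj)]
  rw [e]
  simp only [Function.update_self]
  obtain ⟨k, hk⟩ := Nat.exists_eq_succ_of_ne_zero hi
  have h := Nat.add_one_mul_choose_eq k (r i)
  have hq : ((k : ℚ) + 1) * Nat.choose k (r i) = Nat.choose (k + 1) (r i + 1) * (r i + 1) := by
    exact_mod_cast h
  rw [hk]
  simp only [Nat.succ_eq_add_one, Nat.add_sub_cancel]
  push_cast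
  rw [pow_succ]
  linear_combination (x i * (-x i) ^ r i * ∏ j ∈ Finset.univ.erase i,
    (-x j) ^ (Function.update r i (r i + 1) j) *
      (Nat.choose (n j) (Function.update r i (r i + 1) j) : ℚ)) * hq

lemma sum_update_succ {m : ℕ} (r : Fin m → ℕ) (i : Fin m) :
    ∑ j, Function.update r i (r i + 1) j = ∑ j, r j + 1 := by
  rw [Finset.sum_update_of_mem (Finset.mem_univ i),
    ← Finset.add_sum_erase _ _ (Finset.mem_univ i), Finset.sdiff_singleton_eq_erase]
  ring

/-- The `i`-th summand of the recurrence as a sum over the full box of tuples. The truncated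
subtraction `∑ j, r j - 1` is harmless: it truncates only at `r = 0`, where the factor `r i`
vanishes. -/
lemma mul_multiShare_update {m : ℕ} (x : Fin m → ℚ) (l : ℕ) (n : Fin m → ℕ) (i : Fin m) :
    x i * n i * multiShare m x l (Function.update n i (n i - 1)) =
      -∑ r ∈ Fintype.piFinset (fun j => Finset.range (n j + 1)),
        r i * (shareWeight x n r / shareDenom l (∑ j, r j - 1)) := by
  by_cases hi : n i = 0
  · rw [hi, Finset.sum_eq_zero]
    · simp
    · intro r hr
      have := Fintype.mem_piFinset.1 hr i
      have h0 : r i = 0 := by simpa [hi] using this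
      simp [h0]
  rw [multiShare_eq, Finset.mul_sum, ← Finset.sum_neg_distrib,
    ← Finset.sum_filter_of_ne (s := Fintype.piFinset (fun j => Finset.range (n j + 1)))
      (p := fun r => r i ≠ 0)]
  · refine Finset.sum_nbij' (fun r => Function.update r i (r i + 1))
      (fun r => Function.update r i (r i - 1)) ?_ ?_ ?_ ?_ ?_
    · intro r hr
      simp only [Fintype.mem_piFinset, Finset.mem_range, Finset.mem_filter] at hr ⊢
      refine ⟨fun j => ?_, by simp⟩
      have := hr j
      rcases eq_or_ne j i with rfl | hj
      · simp only [Function.update_self] at this ⊢; omega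
      · simpa [Function.update_of_ne hj] using this
    · intro r hr
      simp only [Fintype.mem_piFinset, Finset.mem_range, Finset.mem_filter] at hr ⊢
      intro j
      have := hr.1 j
      rcases eq_or_ne j i with rfl | hj
      · simp only [Function.update_self]; omega
      · simpa [Function.update_of_ne hj] using this
    · intro r _
      simp
    · intro r hr
      have h0 : r i ≠ 0 := (Finset.mem_filter.1 hr).2
      simp [Nat.sub_add_cancel (Nat.one_le_iff_ne_zero.2 h0)]
    · intro r _
      rw [sum_update_succ, Nat.add_sub_cancel, ← mul_div_assoc, shareWeight_shift x n r i hi,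
        Function.update_self]
      ring
  · intro r _ h h0
    simp [h0] at h

theorem multiShare_recurrence (m : ℕ) (hm : 1 ≤ m) (x : Fin m → ℚ)
    (n : Fin m → ℕ) (l : ℕ) (hl : 1 ≤ l) :
    (l : ℚ) * multiShare m x l n +
      ∑ i, x i * (n i : ℚ) *
        multiShare m x (l + 1) (Function.update n i (n i - 1)) = 1 := by
  have hsum : ∑ i, x i * (n i : ℚ) *
        multiShare m x (l + 1) (Function.update n i (n i - 1)) =
      -∑ r ∈ Fintype.piFinset (fun j => Finset.range (n j + 1)),
        ((∑ j, r j : ℕ) : ℚ) * (shareWeight x n r / shareDenom (l + 1) (∑ j, r j - 1)) := by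
    simp only [mul_multiShare_update, Finset.sum_neg_distrib]
    rw [Finset.sum_comm]
    simp only [← Finset.sum_mul, Nat.cast_sum]
  rw [hsum, multiShare_eq, Finset.mul_sum, ← sub_eq_add_neg, ← Finset.sum_sub_distrib,
    Finset.sum_eq_single (0 : Fin m → ℕ)]
  · have h : (Nat.choose l (l - 1) : ℚ) = l := by
      obtain ⟨k, rfl⟩ : ∃ k, l = k + 1 := ⟨l - 1, by omega⟩
      simp
    have hl0 : (l : ℚ) ≠ 0 := by positivity
    simp [shareWeight, shareDenom, h, hl0]
  · intro r _ hr
    obtain ⟨s, hs⟩ : ∃ s, ∑ j, r j = s + 1 := by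
      refine Nat.exists_eq_succ_of_ne_zero fun h => hr ?_
      funext j
      exact Finset.sum_eq_zero_iff.1 h j (Finset.mem_univ j)
    rw [hs, Nat.add_sub_cancel]
    have h1 := (shareDenom_pos (l + 1) s).ne'
    have h2 := (shareDenom_pos l (s + 1)).ne'
    have h3 := shareDenom_succ l s hl
    field_simp
    push_cast
    linear_combination shareWeight x n r * h3
  · intro h
    exact absurd (by simp) h
end

section
/- Let m ≥ 1, x : Fin m → ℚ, and l ≥ 1 an integer. Suppose a assigns to each integer l' ≥ 1 and each tuple n : Fin m → ℕ a rational number a(l'; n) such that a(l'; 0) = 1/l' for all l' ≥ 1 and l'·a(l'; n) + ∑_{i=1}^{m} x_i · n_i · a(l'+1; n − e_i) = 1 whenever n ≠ 0 (with the i-th summand interpreted as 0 when n_i = 0). Then for all l' ≥ 1 and all n, a(l'; n) = ∑_{r} [∏_{j=1}^{m} (-x_j)^{r_j} · binomial(n_j, r_j)] / [(1 + r_1 + ⋯ + r_m) · binomial(l' + r_1 + ⋯ + r_m, l' - 1)], where the sum ranges over all m-tuples r with 0 ≤ r_j ≤ n_j for each j. -/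
open Polynomial

/-- The moment `∫₀¹ (1-s)^(l-1) s^R ds`, in the form in which it occurs in `multiShare`. -/
noncomputable def betaMoment (l R : ℕ) : ℚ :=
  1 / ((1 + (R : ℚ)) * (Nat.choose (l + R) (l - 1) : ℚ))

/-- The functional `p ↦ ∫₀¹ (1-s)^(l-1) p(s) ds` on polynomials, defined by its moments. -/
noncomputable def betaFunctional (l : ℕ) : ℚ[X] →ₗ[ℚ] ℚ :=
  Polynomial.lsum fun R => betaMoment l R • LinearMap.id

/-- The generating polynomial `∏ j, (1 - x j * X) ^ n j`. -/
noncomputable def mistressPoly {m : ℕ} (x : Fin m → ℚ) (n : Fin m → ℕ) : ℚ[X] :=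
  ∏ j, (1 + C (-x j) * X) ^ n j

lemma betaFunctional_monomial (l R : ℕ) (c : ℚ) :
    betaFunctional l (monomial R c) = betaMoment l R * c := by
  simp [betaFunctional, Polynomial.lsum_apply, Polynomial.sum_monomial_index]

lemma betaMoment_zero (l : ℕ) (hl : 1 ≤ l) : (l : ℚ) * betaMoment l 0 = 1 := by
  obtain ⟨k, rfl⟩ : ∃ k, l = k + 1 := ⟨l - 1, by omega⟩
  have : ((k : ℚ) + 1) ≠ 0 := by positivity
  simp [betaMoment, this]

lemma betaMoment_succ (l R : ℕ) (hl : 1 ≤ l) :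
    (l : ℚ) * betaMoment l (R + 1) = (R + 1) * betaMoment (l + 1) R := by
  obtain ⟨k, rfl⟩ : ∃ k, l = k + 1 := ⟨l - 1, by omega⟩
  -- Both moments involve the binomial coefficients `C(k + R + 2, ·)`, at `k` and at `k + 1`.
  have h := Nat.choose_succ_right_eq (k + R + 2) k
  rw [show k + R + 2 - k = R + 2 by omega] at h
  have h' : ((k + R + 2).choose (k + 1) : ℚ) * (k + 1) = (k + R + 2).choose k * (R + 2) := by
    exact_mod_cast h
  have h1 : ((k + R + 2).choose k : ℚ) ≠ 0 := by
    exact_mod_cast (Nat.choose_pos (by omega)).ne'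
  have h2 : ((k + R + 2).choose (k + 1) : ℚ) ≠ 0 := by
    exact_mod_cast (Nat.choose_pos (by omega)).ne'
  have h3 : (1 + (R : ℚ)) ≠ 0 := by positivity
  have h4 : (1 + ((R : ℚ) + 1)) ≠ 0 := by positivity
  unfold betaMoment
  rw [show k + 1 + (R + 1) = k + R + 2 by ring, show k + 1 + 1 + R = k + R + 2 by ring]
  simp only [Nat.add_sub_cancel]
  push_cast
  field_simp
  linear_combination (1 + (R : ℚ)) * h'

/-- Integration by parts for `∫₀¹ (1-s)^(l-1) p(s) ds`. -/
lemma betaFunctional_parts (l : ℕ) (hl : 1 ≤ l) (p : ℚ[X]) :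
    (l : ℚ) * betaFunctional l p = p.eval 0 + betaFunctional (l + 1) (derivative p) := by
  induction p using Polynomial.induction_on' with
  | add p q hp hq =>
    simp only [map_add, eval_add]
    linear_combination hp + hq
  | monomial R c =>
    rw [derivative_monomial, betaFunctional_monomial, betaFunctional_monomial]
    rcases R with _ | R
    · simp [← mul_assoc, betaMoment_zero l hl]
    · have h := betaMoment_succ l R hl
      simp only [eval_monomial, Nat.add_sub_cancel]
      push_cast
      linear_combination c * h

lemma derivative_mistressPoly {m : ℕ} (x : Fin m → ℚ) (n : Fin m → ℕ) :
    derivative (mistressPoly x n) =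
      ∑ i, (-(x i * (n i : ℚ))) • mistressPoly x (Function.update n i (n i - 1)) := by
  unfold mistressPoly
  rw [derivative_prod_finset]
  refine Finset.sum_congr rfl fun i _ => ?_
  rw [← Finset.mul_prod_erase Finset.univ
    (fun j => (1 + C (-x j) * X) ^ Function.update n i (n i - 1) j) (Finset.mem_univ i)]
  have h : ∏ j ∈ Finset.univ.erase i, (1 + C (-x j) * X) ^ Function.update n i (n i - 1) j =
      ∏ j ∈ Finset.univ.erase i, (1 + C (-x j) * X) ^ n j :=
    Finset.prod_congr rfl fun j hj => by
      rw [Function.update_of_ne (Finset.ne_of_mem_erase hj)]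
  have hd : derivative (1 + C (-x i) * X) = C (-x i) := by simp
  rw [h, Function.update_self, derivative_pow, smul_eq_C_mul, hd]
  simp only [map_neg, map_mul, map_natCast]
  ring

/-- The multinomial expansion of the integrand. -/
lemma multiShare_eq_s6 (m : ℕ) (x : Fin m → ℚ) (l : ℕ) (n : Fin m → ℕ) :
    multiShare m x l n = betaFunctional l (mistressPoly x n) := by
  have h : ∀ j, (1 + C (-x j) * X : ℚ[X]) ^ n j =
      ∑ r ∈ Finset.range (n j + 1), monomial r ((-x j) ^ r * (Nat.choose (n j) r : ℚ)) := by
    intro j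
    rw [add_comm, add_pow]
    refine Finset.sum_congr rfl fun r _ => ?_
    rw [← C_mul_X_pow_eq_monomial]
    simp only [one_pow, mul_pow, map_mul, map_pow, map_natCast]
    ring
  have hprod : ∀ r : Fin m → ℕ, ∀ c : Fin m → ℚ,
      ∏ j, (monomial (r j) (c j) : ℚ[X]) = monomial (∑ j, r j) (∏ j, c j) := by
    intro r c
    simp only [← C_mul_X_pow_eq_monomial, Finset.prod_mul_distrib, map_prod,
      Finset.prod_pow_eq_pow_sum]
  unfold mistressPoly multiShare
  rw [Finset.prod_congr rfl fun j _ => h j, Finset.prod_univ_sum, map_sum]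
  refine Finset.sum_congr rfl fun r _ => ?_
  rw [hprod, betaFunctional_monomial, betaMoment]
  ring

/-- The closed form satisfies the recurrence, which at `n = 0` is the base case. -/
lemma multiShare_rec (m : ℕ) (x : Fin m → ℚ) (l : ℕ) (hl : 1 ≤ l) (n : Fin m → ℕ) :
    (l : ℚ) * multiShare m x l n +
      ∑ i, x i * (n i : ℚ) * multiShare m x (l + 1) (Function.update n i (n i - 1)) = 1 := by
  have h0 : (mistressPoly x n).eval 0 = 1 := by
    simp [mistressPoly, eval_prod]
  simp only [multiShare_eq_s6]
  rw [betaFunctional_parts l hl, derivative_mistressPoly, h0, map_sum, add_assoc,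
    ← Finset.sum_add_distrib]
  simp

theorem multi_mistress_formula (m : ℕ) (hm : 1 ≤ m) (x : Fin m → ℚ) (l : ℕ) (hl : 1 ≤ l)
    (a : ℕ → (Fin m → ℕ) → ℚ)
    (hbase : ∀ l' : ℕ, 1 ≤ l' → a l' 0 = 1 / (l' : ℚ))
    (hrec : ∀ l' : ℕ, 1 ≤ l' → ∀ n : Fin m → ℕ, n ≠ 0 →
      (l' : ℚ) * a l' n +
        ∑ i, x i * (n i : ℚ) * a (l' + 1) (Function.update n i (n i - 1)) = 1) :
    ∀ l' : ℕ, 1 ≤ l' → ∀ n : Fin m → ℕ, a l' n = multiShare m x l' n := by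
  intro l' hl' n
  induction hN : ∑ j, n j using Nat.strong_induction_on generalizing l' n with
  | _ N ih =>
    have hl0 : (l' : ℚ) ≠ 0 := by positivity
    have hS := multiShare_rec m x l' hl' n
    rcases eq_or_ne n 0 with rfl | hn
    · simp only [Pi.zero_apply, Nat.cast_zero, mul_zero, zero_mul, Finset.sum_const_zero,
        add_zero] at hS
      rw [hbase l' hl']
      field_simp
      linarith
    · have hA := hrec l' hl' n hn
      have hsum : ∑ i, x i * (n i : ℚ) * a (l' + 1) (Function.update n i (n i - 1)) =
          ∑ i, x i * (n i : ℚ) * multiShare m x (l' + 1) (Function.update n i (n i - 1)) := by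
        refine Finset.sum_congr rfl fun i _ => ?_
        -- For `n i = 0` the truncated `n i - 1` does not decrease, but the summand vanishes.
        rcases Nat.eq_zero_or_pos (n i) with h0 | hpos
        · simp [h0]
        · rw [ih _ ?_ (l' + 1) (by omega) _ rfl]
          rw [← hN]
          refine Finset.sum_lt_sum (fun j _ => ?_) ⟨i, Finset.mem_univ i, ?_⟩
          · rcases eq_or_ne j i with rfl | hj
            · simp
            · rw [Function.update_of_ne hj]
          · rw [Function.update_self]
            omega
      rw [hsum] at hA
      exact mul_left_cancel₀ hl0 (by linarith)
end
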